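/- Suppose ε_ħ ħ^{−3/2} → ∞ and ε_ħ/ħ → 0 as ħ → 0⁺. Then for the periodized coherent state ψ_ħ with ξ₀ ≠ 0, for every primitive rank-1 sublattice Λ ⊆ ℤ² and every smooth compactly supported a : 𝕋² × ℝ → ℂ: (i) if ⟨ξ₀, v_Λ⟩ ≠ 0, then W_{Λ,ħ}(a) → 0 as ħ → 0⁺; (ii) if ⟨ξ₀, v_Λ⟩ = 0, then W_{Λ,ħ}(a) → I_Λ(a)(x₀, 0) as ħ → 0⁺, where I_Λ(a)(x, η) := L_Λ^{−1} ∫₀^{L_Λ} a(x + t v_Λ^⊥/L_Λ, η) dt. -/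

import Mathlib

open MeasureTheory Filter Real
open scoped Topology

noncomputable section

/-- The Euclidean inner product on `ℝ²`. -/
def dot2 (v w : ℝ × ℝ) : ℝ := v.1 * w.1 + v.2 * w.2

/-- The Euclidean norm on `ℝ²`. -/
def nrm2 (v : ℝ × ℝ) : ℝ := Real.sqrt (dot2 v v)

/-- The canonical embedding `ℤ² ↪ ℝ²`. -/
def toR2 (m : ℤ × ℤ) : ℝ × ℝ := ((m.1 : ℝ), (m.2 : ℝ))

/-- Rotation of an integer vector by `+π/2`. -/
def perpZ (v : ℤ × ℤ) : ℤ × ℤ := (-v.2, v.1)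

/-- `v` generates a primitive rank-1 sublattice `Λ = ℤ v` of `ℤ²`. -/
def Primitive (v : ℤ × ℤ) : Prop := Int.gcd v.1 v.2 = 1

/-- `L_Λ = ‖v_Λ‖`. -/
def LL (v : ℤ × ℤ) : ℝ := nrm2 (toR2 v)

/-- `H_Λ(ξ) = ⟨ξ, v_Λ⟩ / L_Λ`, where `v` is the generator `v_Λ` of `Λ`. -/
def HH (v : ℤ × ℤ) (ξ : ℝ × ℝ) : ℝ := dot2 ξ (toR2 v) / LL v

/-- Integral over a fundamental domain of the torus `𝕋² = ℝ²/ℤ²`. -/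
def torusInt (f : ℝ × ℝ → ℂ) : ℂ :=
  ∫ x in Set.Icc ((0, 0) : ℝ × ℝ) ((1, 1) : ℝ × ℝ), f x

/-- `e^{it}`. -/
def expI (t : ℝ) : ℂ := Complex.exp (Complex.I * (t : ℂ))

/-- The `j`-th Fourier coefficient (in `x`) of `a : 𝕋² × ℝ → ℂ`:
`â(j, η) = ∫_{𝕋²} a(x, η) e^{-2πi j·x} dx`. -/
def fcoef (a : ℝ × ℝ → ℝ → ℂ) (j : ℤ × ℤ) (η : ℝ) : ℂ :=
  torusInt fun x => a x η * expI (-(2 * π * dot2 (toR2 j) x))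

/-- The Fourier transform on `ℝ²`: `φ̂(ξ) = ∫_{ℝ²} φ(x) e^{-2πi x·ξ} dx`. -/
def FT (φ : ℝ × ℝ → ℂ) (ξ : ℝ × ℝ) : ℂ :=
  ∫ x : ℝ × ℝ, φ x * expI (-(2 * π * dot2 x ξ))

/-- The `m`-th Fourier coefficient of the periodized coherent state:
`ψ̂_hb(m) = hb^{1/2} e^{-2πi (m - ξ₀/hb)·x₀} φ̂(hb^{1/2}(m - ξ₀/hb))`. -/
def psiF (φ : ℝ × ℝ → ℂ) (x₀ ξ₀ : ℝ × ℝ) (hb : ℝ) (m : ℤ × ℤ) : ℂ :=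
  (Real.sqrt hb : ℂ) * expI (-(2 * π * dot2 (toR2 m - hb⁻¹ • ξ₀) x₀)) *
    FT φ (Real.sqrt hb • (toR2 m - hb⁻¹ • ξ₀))

/-- The two-microlocal quantity
`W_{Λ,hb}(a) = Σ_{m ∈ ℤ²} Σ_{j ∈ Λ} conj(ψ̂_hb(m)) ψ̂_hb(m−j) â(j, 2π hb² ε_hb⁻¹ H_Λ(m))`,
for the periodized coherent state, where `Λ = ℤ w` and `e = ε_hb`. -/
def Wcs (φ : ℝ × ℝ → ℂ) (x₀ ξ₀ : ℝ × ℝ) (w : ℤ × ℤ) (a : ℝ × ℝ → ℝ → ℂ)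
    (hb e : ℝ) : ℂ :=
  ∑' m : ℤ × ℤ, ∑' c : ℤ,
    (starRingEnd ℂ) (psiF φ x₀ ξ₀ hb m) * psiF φ x₀ ξ₀ hb (m - c • w) *
      fcoef a (c • w) (2 * π * hb ^ 2 / e * HH w (toR2 m))

/-- The average of `a` along the periodic flow in the direction `v_Λ^⊥/L_Λ`:
`I_Λ(a)(x, η) = L_Λ⁻¹ ∫₀^{L_Λ} a(x + t v_Λ^⊥/L_Λ, η) dt`. -/
def IΛ (w : ℤ × ℤ) (a : ℝ × ℝ → ℝ → ℂ) (x : ℝ × ℝ) (η : ℝ) : ℂ :=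
  ((LL w : ℝ) : ℂ)⁻¹ * ∫ t in (0:ℝ)..(LL w), a (x + (t / LL w) • toR2 (perpZ w)) η

/-!
Up to the character `e^{2πi j·x₀}`, the product `conj(ψ̂(m)) ψ̂(m - j)` samples
`conj(φ̂(ξ)) φ̂(ξ - √ħ j)` on the lattice of mesh `√ħ`. Since `φ` has compact support, its rescaled
periodization does not wrap around, so Parseval's identity is exact on this lattice: replacing
`φ̂(ξ - √ħ j)` by `φ̂(ξ)` costs `O(√ħ)`, and a weight `b` with `|b - l| ≤ κ |ξ · v|` contributes
`l ‖φ‖²` up to `O(κ)`, because `φ̂(ξ) (ξ · v)` is square summable.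

For a symbol `a` the weight is `b = â(j, η)` with `η = 2πħ² ε⁻¹ H_Λ(m)` and
`m = ξ₀/ħ + ξ/√ħ`. If `⟨ξ₀, v_Λ⟩ = 0`, then `|η| = O(ħ^{3/2} ε⁻¹ |ξ · v_Λ|)` and the Lipschitz bound
on `â(j, ·)` gives `l = â(j, 0)` with `κ → 0`. If `⟨ξ₀, v_Λ⟩ ≠ 0`, then `b` vanishes unless
`|ξ · v_Λ| ≥ c ħ^{-1/2}`, which gives `l = 0` with `κ = O(√ħ)`. Two integrations by parts make
`â(j, ·)` summable over `j ∈ Λ`, so the limits may be summed over `Λ`, and the resulting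
`∑_{j ∈ Λ} e^{2πi j·x₀} â(j, 0)` is the Fourier series of `I_Λ(a)(·, 0)` at `x₀`.
-/

/-! ### Characters and the pairing on `ℝ²` -/

@[simp]
theorem norm_expI (t : ℝ) : ‖expI t‖ = 1 := by
  rw [expI, mul_comm, Complex.norm_exp_ofReal_mul_I]

theorem expI_add (s t : ℝ) : expI (s + t) = expI s * expI t := by
  rw [expI, expI, expI, ← Complex.exp_add, Complex.ofReal_add, mul_add]

theorem conj_expI (t : ℝ) : (starRingEnd ℂ) (expI t) = expI (-t) := by
  simp [expI, ← Complex.exp_conj]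

theorem expI_two_pi_mul_intCast (n : ℤ) : expI (2 * π * n) = 1 := by
  rw [expI, Complex.exp_eq_one_iff]
  exact ⟨n, by push_cast; ring⟩

theorem norm_expI_sub_one_le (t : ℝ) : ‖expI t - 1‖ ≤ |t| :=
  Real.norm_exp_I_mul_ofReal_sub_one_le

theorem contDiff_expI {n : WithTop ℕ∞} : ContDiff ℝ n expI :=
  (contDiff_const.mul Complex.ofRealCLM.contDiff).cexp

@[fun_prop]
theorem continuous_expI : Continuous expI :=
  contDiff_expI (n := 0).continuous

theorem fourier_coe_eq_expI (n : ℤ) (t : ℝ) :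
    fourier n (t : AddCircle (1 : ℝ)) = expI (2 * π * (n * t)) := by
  rw [fourier_coe_apply, expI]
  congr 1
  push_cast
  ring

@[fun_prop]
theorem contDiff_dot2 {n : WithTop ℕ∞} :
    ContDiff ℝ n fun p : (ℝ × ℝ) × (ℝ × ℝ) => dot2 p.1 p.2 := by
  unfold dot2
  fun_prop

@[fun_prop]
theorem continuous_dot2 : Continuous fun p : (ℝ × ℝ) × (ℝ × ℝ) => dot2 p.1 p.2 :=
  (contDiff_dot2 (n := 0)).continuous

theorem dot2_comm (x y : ℝ × ℝ) : dot2 x y = dot2 y x := by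
  simp only [dot2, mul_comm]

theorem dot2_add (x y z : ℝ × ℝ) : dot2 x (y + z) = dot2 x y + dot2 x z := by
  simp only [dot2, Prod.fst_add, Prod.snd_add]
  ring

theorem dot2_smul (r : ℝ) (x y : ℝ × ℝ) : dot2 x (r • y) = r * dot2 x y := by
  simp only [dot2, Prod.smul_fst, Prod.smul_snd, smul_eq_mul]
  ring

theorem fderiv_mul_expI {f : ℝ × ℝ → ℂ} {x : ℝ × ℝ} (hf : DifferentiableAt ℝ f x)
    (ξ v : ℝ × ℝ) :
    fderiv ℝ (fun y => f y * expI (-(2 * π * dot2 ξ y))) x v =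
      (fderiv ℝ f x v - 2 * π * dot2 ξ v * Complex.I * f x) * expI (-(2 * π * dot2 ξ x)) := by
  have hline : HasDerivAt (fun t : ℝ => -(2 * π * dot2 ξ (x + t • v))) (-(2 * π * dot2 ξ v)) 0 := by
    simp only [dot2_add, dot2_smul]
    simpa using (((hasDerivAt_id (0 : ℝ)).mul_const (dot2 ξ v)).const_add (dot2 ξ x)).const_mul
      (2 * π) |>.fun_neg
  have hphase : HasDerivAt (fun t : ℝ => expI (-(2 * π * dot2 ξ (x + t • v))))
      (expI (-(2 * π * dot2 ξ x)) * (Complex.I * ↑(-(2 * π * dot2 ξ v)))) 0 := by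
    simpa [expI] using (hline.ofReal_comp.const_mul Complex.I).cexp
  have hfd : HasDerivAt (fun t : ℝ => f (x + t • v)) (fderiv ℝ f x v) 0 :=
    hf.hasFDerivAt.hasLineDerivAt v
  have hd : DifferentiableAt ℝ (fun y => f y * expI (-(2 * π * dot2 ξ y))) x :=
    hf.mul (by unfold expI dot2; fun_prop)
  rw [← hd.lineDeriv_eq_fderiv]
  refine (hfd.mul hphase).deriv.trans ?_
  simp only [zero_smul, add_zero]
  push_cast
  ring

/-! ### Parseval's identity on scaled lattices -/

open scoped FourierTransform

theorem hasSum_sq_norm_fourier_of_support_subset {f : ℝ → ℂ} (hf : MemLp f 2) {h : ℝ} (hh : 0 < h)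
    (hs : Function.support f ⊆ Set.Icc (-(2 * h)⁻¹) (2 * h)⁻¹) :
    HasSum (fun n : ℤ => h * ‖𝓕 f (h * n)‖ ^ 2) (∫ x, ‖f x‖ ^ 2) := by
  have hlen : (2 * h)⁻¹ - -(2 * h)⁻¹ = h⁻¹ := by field_simp; norm_num
  have hab : -(2 * h)⁻¹ < (2 * h)⁻¹ := neg_lt_self (by positivity)
  have hzero : ∀ x ∉ Set.Icc (-(2 * h)⁻¹) (2 * h)⁻¹, f x = 0 := fun x hx =>
    Function.notMem_support.1 fun hx' => hx (hs hx')
  have hcoeff (n : ℤ) : fourierCoeffOn hab f n = h * 𝓕 f (h * n) := by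
    rw [fourierCoeffOn_eq_integral, hlen, intervalIntegral.integral_of_le hab.le,
      ← integral_Icc_eq_integral_Ioc, fourier_real_eq_integral_exp_smul,
      setIntegral_eq_integral_of_forall_compl_eq_zero fun x hx => by simp [hzero x hx],
      one_div, inv_inv, Complex.real_smul]
    congr 2 with x
    rw [fourier_coe_apply]
    congr 2
    push_cast
    field_simp
  have key := (hasSum_sq_fourierCoeffOn hab (hf.restrict _)).mul_left h⁻¹
  rw [hlen, inv_inv, smul_eq_mul, inv_mul_cancel_left₀ hh.ne',
    intervalIntegral.integral_of_le hab.le, ← integral_Icc_eq_integral_Ioc,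
    setIntegral_eq_integral_of_forall_compl_eq_zero fun x hx => by simp [hzero x hx]] at key
  refine key.congr_fun fun n => ?_
  rw [hcoeff, norm_mul, mul_pow, Complex.norm_of_nonneg hh.le, pow_two h, mul_assoc,
    inv_mul_cancel_left₀ hh.ne']

theorem tsum_ofReal_sq_norm_fourier {f : ℝ → ℂ} (hf : MemLp f 2) {h : ℝ} (hh : 0 < h)
    (hs : Function.support f ⊆ Set.Icc (-(2 * h)⁻¹) (2 * h)⁻¹) :
    ∑' n : ℤ, ENNReal.ofReal (h * ‖𝓕 f (h * n)‖ ^ 2) = ∫⁻ x, ENNReal.ofReal (‖f x‖ ^ 2) := by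
  have key := hasSum_sq_norm_fourier_of_support_subset hf hh hs
  have hint : Integrable fun x => ‖f x‖ ^ 2 := hf.integrable_norm_pow two_ne_zero
  rw [← ENNReal.ofReal_tsum_of_nonneg (fun n => by positivity) key.summable, key.tsum_eq,
    ofReal_integral_eq_lintegral_ofReal hint (.of_forall fun x => by positivity)]

theorem fourier_eq_integral_mul_expI (f : ℝ → ℂ) (q : ℝ) :
    𝓕 f q = ∫ y, f y * expI (-(2 * π * (y * q))) := by
  rw [fourier_real_eq_integral_exp_smul]
  congr 1 with y
  rw [smul_eq_mul, mul_comm, expI]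
  congr 2
  push_cast
  ring

theorem integrable_mul_expI {f : ℝ × ℝ → ℂ} (hf : Integrable f) (ξ : ℝ × ℝ) :
    Integrable fun x => f x * expI (-(2 * π * dot2 x ξ)) :=
  hf.mul_bdd (c := 1) (Continuous.aestronglyMeasurable (by fun_prop)) (.of_forall fun x => by simp)

theorem FT_fun_sub {f g : ℝ × ℝ → ℂ} (hf : Integrable f) (hg : Integrable g) (ξ : ℝ × ℝ) :
    FT (fun x => f x - g x) ξ = FT f ξ - FT g ξ := by
  simp only [FT, sub_mul]
  exact integral_sub (integrable_mul_expI hf ξ) (integrable_mul_expI hg ξ)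

/-- The Fourier transform of `f` in its second variable only, at the frequency `q`; it makes the
Fourier transform on `ℝ²` an iterated one-dimensional one. -/
def partialFT (f : ℝ × ℝ → ℂ) (q x : ℝ) : ℂ :=
  𝓕 (fun y => f (x, y)) q

theorem continuous_partialFT {f : ℝ × ℝ → ℂ} (hf : Continuous f) (hfc : HasCompactSupport f)
    (q : ℝ) : Continuous (partialFT f q) := by
  unfold partialFT
  simp only [← continuousOn_univ, fourier_eq_integral_mul_expI]
  refine continuousOn_integral_of_compact_support (k := Prod.snd '' tsupport f)
    (hfc.isCompact.image continuous_snd) (by fun_prop) fun x y _ hy => ?_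
  rw [image_eq_zero_of_notMem_tsupport fun hxy => hy ⟨(x, y), hxy, rfl⟩, zero_mul]

theorem FT_eq_fourier_partialFT {f : ℝ × ℝ → ℂ} (hf : Continuous f) (hfc : HasCompactSupport f)
    (p q : ℝ) : FT f (p, q) = 𝓕 (partialFT f q) p := by
  have hint : Integrable fun x => f x * expI (-(2 * π * dot2 x (p, q))) :=
    integrable_mul_expI (hf.integrable_of_hasCompactSupport hfc) _
  rw [FT, Measure.volume_eq_prod, integral_prod _ hint, fourier_eq_integral_mul_expI]
  congr 1 with x
  rw [partialFT, fourier_eq_integral_mul_expI, ← integral_mul_const]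
  congr 1 with y
  rw [mul_assoc (f (x, y)), ← expI_add, dot2]
  ring_nf

theorem mem_Icc_of_mem_closedBall {x : ℝ × ℝ} {r : ℝ} (hx : x ∈ Metric.closedBall 0 r) :
    x.1 ∈ Set.Icc (-r) r ∧ x.2 ∈ Set.Icc (-r) r := by
  simpa [Prod.norm_def, abs_le] using hx

theorem support_partialFT_subset {f : ℝ × ℝ → ℂ} {r : ℝ}
    (hs : Function.support f ⊆ Metric.closedBall 0 r) (q : ℝ) :
    Function.support (partialFT f q) ⊆ Set.Icc (-r) r := by
  intro x hx
  by_contra hxr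
  have hzero (y : ℝ) : f (x, y) = 0 :=
    Function.notMem_support.1 fun h => hxr (mem_Icc_of_mem_closedBall (hs h)).1
  exact hx (by simp [partialFT, fourier_eq_integral_mul_expI, hzero])

theorem tsum_ofReal_sq_norm_FT {f : ℝ × ℝ → ℂ} (hf : Continuous f) {h : ℝ} (hh : 0 < h)
    (hs : Function.support f ⊆ Metric.closedBall 0 (2 * h)⁻¹) :
    ∑' m : ℤ × ℤ, ENNReal.ofReal (h ^ 2 * ‖FT f (h • toR2 m)‖ ^ 2) =
      ∫⁻ x, ENNReal.ofReal (‖f x‖ ^ 2) := by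
  have hfc : HasCompactSupport f := .of_support_subset_isCompact (isCompact_closedBall 0 _) hs
  have hrow (n : ℤ) : ∑' k : ℤ, ENNReal.ofReal (h ^ 2 * ‖FT f (h • toR2 (k, n))‖ ^ 2) =
      ∫⁻ x, ENNReal.ofReal (h * ‖partialFT f (h * n) x‖ ^ 2) := by
    have hcont := continuous_partialFT hf hfc (h * n)
    have hsupp := support_partialFT_subset hs (h * n)
    simp_rw [ENNReal.ofReal_mul hh.le]
    rw [lintegral_const_mul' _ _ ENNReal.ofReal_ne_top, ← tsum_ofReal_sq_norm_fourier
      (hcont.memLp_of_hasCompactSupport (.of_support_subset_isCompact isCompact_Icc hsupp)) hh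
      hsupp, ← ENNReal.tsum_mul_left]
    congr 1 with k
    rw [← FT_eq_fourier_partialFT hf hfc, ← ENNReal.ofReal_mul hh.le, pow_two h, mul_assoc]
    rfl
  have hcol (x : ℝ) : ∑' n : ℤ, ENNReal.ofReal (h * ‖partialFT f (h * n) x‖ ^ 2) =
      ∫⁻ y, ENNReal.ofReal (‖f (x, y)‖ ^ 2) := by
    have hsupp : Function.support (fun y => f (x, y)) ⊆ Set.Icc (-(2 * h)⁻¹) (2 * h)⁻¹ :=
      fun y hy => (mem_Icc_of_mem_closedBall (hs hy)).2
    have hcont : Continuous fun y => f (x, y) := by fun_prop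
    exact tsum_ofReal_sq_norm_fourier (hcont.memLp_of_hasCompactSupport
      (.of_support_subset_isCompact isCompact_Icc hsupp)) hh hsupp
  calc
    _ = ∑' n : ℤ, ∫⁻ x, ENNReal.ofReal (h * ‖partialFT f (h * n) x‖ ^ 2) := by
      rw [ENNReal.tsum_prod', ENNReal.tsum_comm]
      exact tsum_congr hrow
    _ = ∫⁻ x, ∫⁻ y, ENNReal.ofReal (‖f (x, y)‖ ^ 2) := by
      rw [← lintegral_tsum fun n => by
        have := continuous_partialFT hf hfc (h * n)
        fun_prop]
      simp_rw [hcol]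
    _ = ∫⁻ x, ENNReal.ofReal (‖f x‖ ^ 2) := by
      rw [Measure.volume_eq_prod, lintegral_prod _ (by fun_prop)]

theorem hasSum_of_tsum_ofReal_eq {ι : Type*} {f : ι → ℝ} {s : ℝ} (hf : ∀ i, 0 ≤ f i) (hs : 0 ≤ s)
    (h : ∑' i, ENNReal.ofReal (f i) = ENNReal.ofReal s) : HasSum f s := by
  have hsum : Summable f := by
    have := ENNReal.summable_toReal (h.trans_ne ENNReal.ofReal_ne_top)
    simpa only [ENNReal.toReal_ofReal (hf _)] using this
  rw [← ENNReal.ofReal_tsum_of_nonneg hf hsum,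
    ENNReal.ofReal_eq_ofReal_iff (tsum_nonneg hf) hs] at h
  exact h ▸ hsum.hasSum

theorem hasSum_sq_norm_FT {f : ℝ × ℝ → ℂ} (hf : Continuous f) {h : ℝ} (hh : 0 < h)
    (hs : Function.support f ⊆ Metric.closedBall 0 (2 * h)⁻¹) :
    HasSum (fun m : ℤ × ℤ => h ^ 2 * ‖FT f (h • toR2 m)‖ ^ 2) (∫ x, ‖f x‖ ^ 2) := by
  have hfc : HasCompactSupport f := .of_support_subset_isCompact (isCompact_closedBall 0 _) hs
  have hint : Integrable fun x => ‖f x‖ ^ 2 :=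
    (hf.memLp_of_hasCompactSupport hfc).integrable_norm_pow two_ne_zero
  refine hasSum_of_tsum_ofReal_eq (fun m => by positivity) (by positivity) ?_
  rw [tsum_ofReal_sq_norm_FT hf hh hs,
    ofReal_integral_eq_lintegral_ofReal hint (.of_forall fun x => by positivity)]

theorem FT_sub (f : ℝ × ℝ → ℂ) (ξ ζ : ℝ × ℝ) :
    FT f (ξ - ζ) = FT (fun x => f x * expI (2 * π * dot2 x ζ)) ξ := by
  unfold FT
  congr 1 with x
  rw [mul_assoc (f x), ← expI_add, sub_eq_add_neg, dot2_add, ← neg_one_smul ℝ ζ, dot2_smul]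
  ring_nf

theorem integrable_fderiv_apply {E : Type*} [NormedAddCommGroup E] [NormedSpace ℝ E]
    [MeasurableSpace E] [BorelSpace E] {μ : Measure E} [IsFiniteMeasureOnCompacts μ]
    {f : E → ℂ} (hf : ContDiff ℝ 1 f) (hfc : HasCompactSupport f) (v : E) :
    Integrable (fun x => fderiv ℝ f x v) μ :=
  ((hf.continuous_fderiv one_ne_zero).clm_apply continuous_const).integrable_of_hasCompactSupport
    (hfc.fderiv_apply ℝ v)

theorem integral_fderiv_apply_eq_zero {E : Type*} [NormedAddCommGroup E] [NormedSpace ℝ E]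
    [MeasurableSpace E] [BorelSpace E] [FiniteDimensional ℝ E] {μ : Measure E} [μ.IsAddHaarMeasure]
    {f : E → ℂ} (hf : ContDiff ℝ 1 f) (hfc : HasCompactSupport f) (v : E) :
    ∫ x, fderiv ℝ f x v ∂μ = 0 := by
  simpa using integral_mul_fderiv_eq_neg_fderiv_mul_of_integrable (μ := μ) (f := fun _ => (1 : ℂ))
    (g := f) (v := v) (by simp) (by simpa using integrable_fderiv_apply hf hfc v)
    (by simpa using hf.continuous.integrable_of_hasCompactSupport hfc)
    (fun x _ => differentiableAt_const _) fun x _ => hf.differentiable one_ne_zero x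

theorem FT_fderiv_apply {f : ℝ × ℝ → ℂ} (hf : ContDiff ℝ 1 f) (hfc : HasCompactSupport f)
    (v ξ : ℝ × ℝ) :
    FT (fun x => fderiv ℝ f x v) ξ = 2 * π * dot2 ξ v * Complex.I * FT f ξ := by
  have hmod : ContDiff ℝ 1 fun x => f x * expI (-(2 * π * dot2 ξ x)) :=
    hf.mul (contDiff_expI.comp (by fun_prop))
  have key := integral_fderiv_apply_eq_zero (μ := volume) hmod hfc.mul_right v
  simp_rw [fderiv_mul_expI (hf.differentiable one_ne_zero _), sub_mul, mul_assoc _ (f _),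
    dot2_comm ξ] at key
  rw [integral_sub (integrable_mul_expI (integrable_fderiv_apply hf hfc v) ξ)
    ((integrable_mul_expI (hf.continuous.integrable_of_hasCompactSupport hfc) ξ).const_mul _),
    integral_const_mul, sub_eq_zero] at key
  rw [FT, key, FT, dot2_comm ξ]

/-! ### Perturbed `ℓ²` pairings -/

theorem exists_hasSum_mul_of_hasSum_sq {ι : Type*} {f g : ι → ℝ} {F G : ℝ} (hf : ∀ i, 0 ≤ f i)
    (hg : ∀ i, 0 ≤ g i) (hF : HasSum (fun i => f i ^ 2) F) (hG : HasSum (fun i => g i ^ 2) G) :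
    ∃ C ≤ √F * √G, HasSum (fun i => f i * g i) C := by
  have hF0 : 0 ≤ F := hF.nonneg fun i => sq_nonneg (f i)
  have hG0 : 0 ≤ G := hG.nonneg fun i => sq_nonneg (g i)
  obtain ⟨C, -, hC, hsum⟩ := Real.inner_le_Lp_mul_Lq_hasSum_of_nonneg .two_two
    (Real.sqrt_nonneg F) (Real.sqrt_nonneg G) hf hg (by simpa [Real.sq_sqrt hF0] using hF)
    (by simpa [Real.sq_sqrt hG0] using hG)
  exact ⟨C, hC, hsum⟩

theorem norm_tsum_conj_mul_mul_sub_le {ι : Type*} {A A' b : ι → ℂ} {d : ι → ℝ} {l : ℂ}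
    {N N' D S : ℝ} (hN : HasSum (fun i => ‖A i‖ ^ 2) N) (hN' : HasSum (fun i => ‖A' i‖ ^ 2) N')
    (hD : HasSum (fun i => (d i * ‖A i‖) ^ 2) D) (hS : HasSum (fun i => ‖A' i - A i‖ ^ 2) S)
    (hb : ∀ i, ‖b i - l‖ ≤ d i) :
    ‖∑' i, (starRingEnd ℂ) (A i) * A' i * b i - N * l‖ ≤ √D * √N' + √N * √S * ‖l‖ := by
  have hd (i : ι) : 0 ≤ d i := (norm_nonneg _).trans (hb i)
  obtain ⟨C₁, hC₁, hsum₁⟩ := exists_hasSum_mul_of_hasSum_sq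
    (fun i => mul_nonneg (hd i) (norm_nonneg (A i))) (fun i => norm_nonneg (A' i)) hD hN'
  obtain ⟨C₂, hC₂, hsum₂⟩ := exists_hasSum_mul_of_hasSum_sq
    (fun i => norm_nonneg (A i)) (fun i => norm_nonneg (A' i - A i)) hN hS
  have hrem (i : ι) : ‖(starRingEnd ℂ) (A i) * A' i * b i - (‖A i‖ ^ 2 : ℝ) * l‖ ≤
      d i * ‖A i‖ * ‖A' i‖ + ‖A i‖ * ‖A' i - A i‖ * ‖l‖ := by
    have hsplit : (starRingEnd ℂ) (A i) * A' i * b i - (‖A i‖ ^ 2 : ℝ) * l =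
        (starRingEnd ℂ) (A i) * A' i * (b i - l) + (starRingEnd ℂ) (A i) * (A' i - A i) * l := by
      rw [Complex.ofReal_pow, ← Complex.conj_mul']
      ring
    rw [hsplit, mul_rotate (d i)]
    refine (norm_add_le _ _).trans ?_
    simp only [norm_mul, RCLike.norm_conj]
    gcongr
    exact hb i
  have hbound := hsum₁.add (hsum₂.mul_right ‖l‖)
  have hdiag : HasSum (fun i => ((‖A i‖ ^ 2 : ℝ) : ℂ) * l) (N * l) :=
    (Complex.hasSum_ofReal.2 hN).mul_right l
  have hsub := (Summable.of_norm_bounded hbound.summable hrem).hasSum.add hdiag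
  simp only [sub_add_cancel] at hsub
  rw [hsub.tsum_eq, add_sub_cancel_right]
  refine (tsum_of_norm_bounded hbound hrem).trans ?_
  gcongr

theorem tsum_comm_of_norm_bounded {ι κ : Type*} {F : ι → κ → ℂ} {B : κ → ℝ} (hB : Summable B)
    (hF : ∀ k, ∃ C ≤ B k, HasSum (fun i => ‖F i k‖) C) :
    ∑' i, ∑' k, F i k = ∑' k, ∑' i, F i k := by
  choose C hCB hC using hF
  have hsum : Summable fun p : κ × ι => ‖F p.2 p.1‖ := by
    refine (summable_prod_of_nonneg fun p => norm_nonneg _).2 ⟨fun k => (hC k).summable, ?_⟩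
    simp only [(hC _).tsum_eq]
    exact .of_nonneg_of_le (fun k => (hC k).nonneg fun i => norm_nonneg _) hCB hB
  exact (Summable.of_norm (f := Function.uncurry fun k i => F i k) hsum).tsum_comm

/-! ### Fourier coefficients of coherent states -/

/-- The Fourier coefficient of the coherent state of width `h` at position `0` and frequency `s`
on the torus; `psiF` is a phase times it, with `h = √ħ` and `s = ξ₀ / ħ`. -/
def latticeFT (f : ℝ × ℝ → ℂ) (s : ℝ × ℝ) (h : ℝ) (m : ℤ × ℤ) : ℂ :=
  h * FT f (h • (toR2 m - s))

theorem toR2_sub (m n : ℤ × ℤ) : toR2 (m - n) = toR2 m - toR2 n := by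
  simp [toR2]

theorem conj_psiF_mul_psiF_sub (φ : ℝ × ℝ → ℂ) (x₀ ξ₀ : ℝ × ℝ) (hb : ℝ) (m j : ℤ × ℤ) :
    (starRingEnd ℂ) (psiF φ x₀ ξ₀ hb m) * psiF φ x₀ ξ₀ hb (m - j) =
      expI (2 * π * dot2 (toR2 j) x₀) * ((starRingEnd ℂ) (latticeFT φ (hb⁻¹ • ξ₀) √hb m) *
        latticeFT φ (hb⁻¹ • ξ₀) √hb (m - j)) := by
  have hphase : expI (2 * π * dot2 (toR2 j) x₀) =
      (starRingEnd ℂ) (expI (-(2 * π * dot2 (toR2 m - hb⁻¹ • ξ₀) x₀))) *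
        expI (-(2 * π * dot2 (toR2 (m - j) - hb⁻¹ • ξ₀) x₀)) := by
    rw [conj_expI, ← expI_add, toR2_sub]
    congr 1
    simp only [dot2, Prod.fst_sub, Prod.snd_sub]
    ring
  rw [hphase]
  simp only [psiF, latticeFT, map_mul]
  ring

theorem latticeFT_sub (f : ℝ × ℝ → ℂ) (s : ℝ × ℝ) (h : ℝ) (m j : ℤ × ℤ) :
    latticeFT f s h (m - j) =
      latticeFT (fun x => f x * expI (2 * π * dot2 x (h • toR2 j))) s h m := by
  rw [latticeFT, latticeFT, ← FT_sub, toR2_sub, sub_right_comm, smul_sub h (toR2 m - s)]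

section Plancherel

variable {f : ℝ × ℝ → ℂ} {h : ℝ}

theorem hasSum_sq_norm_latticeFT (hf : Continuous f) (hh : 0 < h)
    (hs : Function.support f ⊆ Metric.closedBall 0 (2 * h)⁻¹) (s : ℝ × ℝ) :
    HasSum (fun m => ‖latticeFT f s h m‖ ^ 2) (∫ x, ‖f x‖ ^ 2) := by
  have hmod := hasSum_sq_norm_FT (f := fun x => f x * expI (2 * π * dot2 x (h • s)))
    (by fun_prop) hh fun x hx => hs (left_ne_zero_of_mul hx)
  simpa [latticeFT, smul_sub, FT_sub, mul_pow] using hmod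

theorem hasSum_sq_norm_latticeFT_sub (hf : Continuous f) (hh : 0 < h)
    (hs : Function.support f ⊆ Metric.closedBall 0 (2 * h)⁻¹) (s : ℝ × ℝ) (j : ℤ × ℤ) :
    HasSum (fun m => ‖latticeFT f s h (m - j)‖ ^ 2) (∫ x, ‖f x‖ ^ 2) :=
  (Equiv.subRight j).hasSum_iff.2 (hasSum_sq_norm_latticeFT hf hh hs s)

theorem hasSum_sq_dot2_mul_norm_latticeFT (hf : ContDiff ℝ 1 f) (hh : 0 < h)
    (hs : Function.support f ⊆ Metric.closedBall 0 (2 * h)⁻¹) (s v : ℝ × ℝ) :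
    HasSum (fun m => (2 * π * |dot2 (h • (toR2 m - s)) v| * ‖latticeFT f s h m‖) ^ 2)
      (∫ x, ‖fderiv ℝ f x v‖ ^ 2) := by
  have hfc : HasCompactSupport f := .of_support_subset_isCompact (isCompact_closedBall 0 _) hs
  have hs' : Function.support (fun x => fderiv ℝ f x v) ⊆ Metric.closedBall 0 (2 * h)⁻¹ :=
    (subset_tsupport _).trans <| (tsupport_fderiv_apply_subset ℝ v).trans <|
      closure_minimal hs Metric.isClosed_closedBall
  have hdf : Continuous fun x => fderiv ℝ f x v :=
    (hf.continuous_fderiv one_ne_zero).clm_apply continuous_const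
  refine (hasSum_sq_norm_latticeFT hdf hh hs' s).congr_fun fun m => ?_
  rw [latticeFT, latticeFT, FT_fderiv_apply hf hfc]
  simp [abs_of_pos Real.pi_pos]
  ring

theorem exists_hasSum_sq_norm_latticeFT_sub_sub (hf : Continuous f) (hh : 0 < h)
    (hs : Function.support f ⊆ Metric.closedBall 0 (2 * h)⁻¹) (s : ℝ × ℝ) (j : ℤ × ℤ) :
    ∃ S ≤ (2 * π * h) ^ 2 * ∫ x, ‖dot2 x (toR2 j) * f x‖ ^ 2,
      HasSum (fun m => ‖latticeFT f s h (m - j) - latticeFT f s h m‖ ^ 2) S := by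
  have hfc : HasCompactSupport f := .of_support_subset_isCompact (isCompact_closedBall 0 _) hs
  set e : ℝ × ℝ → ℂ := fun x => expI (2 * π * dot2 x (h • toR2 j))
  have he : Continuous e := by fun_prop
  have hfe : Continuous fun x => f x * e x := hf.mul he
  have hdiff (m : ℤ × ℤ) : latticeFT f s h (m - j) - latticeFT f s h m =
      latticeFT (fun x => f x * e x - f x) s h m := by
    rw [latticeFT_sub, latticeFT, latticeFT, latticeFT,
      FT_fun_sub (hfe.integrable_of_hasCompactSupport hfc.mul_right)
        (hf.integrable_of_hasCompactSupport hfc), mul_sub]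
  have hsupp : Function.support (fun x => f x * e x - f x) ⊆ Function.support f := fun x hx hfx =>
    hx (by simp [hfx])
  have hbound (x : ℝ × ℝ) : ‖f x * e x - f x‖ ^ 2 ≤
      (2 * π * h) ^ 2 * ‖dot2 x (toR2 j) * f x‖ ^ 2 := by
    rw [← mul_sub_one, ← mul_pow, norm_mul, norm_mul, mul_comm ‖f x‖, ← mul_assoc]
    gcongr
    refine (norm_expI_sub_one_le _).trans_eq ?_
    rw [dot2_smul, ← mul_assoc, abs_mul, Complex.norm_real, Real.norm_eq_abs,
      abs_of_nonneg (by positivity : 0 ≤ 2 * π * h)]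
  have hdom : Continuous fun x => ‖dot2 x (toR2 j) * f x‖ ^ 2 := by fun_prop
  refine ⟨∫ x, ‖f x * e x - f x‖ ^ 2, ?_, ?_⟩
  · rw [← integral_const_mul]
    refine integral_mono_of_nonneg (.of_forall fun x => by positivity)
      ((hdom.integrable_of_hasCompactSupport ?_).const_mul _) (.of_forall hbound)
    exact hfc.mono fun x hx hfx => hx (by simp [hfx])
  · simp_rw [hdiff]
    exact hasSum_sq_norm_latticeFT (by fun_prop) hh (hsupp.trans hs) s

theorem norm_tsum_latticeFT_sub_le (hf : ContDiff ℝ 1 f) (hh : 0 < h)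
    (hs : Function.support f ⊆ Metric.closedBall 0 (2 * h)⁻¹) (s v : ℝ × ℝ) (j : ℤ × ℤ)
    {b : ℤ × ℤ → ℂ} {l : ℂ} {κ : ℝ} (hb : ∀ m, ‖b m - l‖ ≤ κ * |dot2 (h • (toR2 m - s)) v|) :
    ‖∑' m, (starRingEnd ℂ) (latticeFT f s h m) * latticeFT f s h (m - j) * b m -
        ↑(∫ x, ‖f x‖ ^ 2) * l‖ ≤
      |κ| * (√(∫ x, ‖fderiv ℝ f x v‖ ^ 2) / (2 * π) * √(∫ x, ‖f x‖ ^ 2)) +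
        h * (2 * π * √(∫ x, ‖f x‖ ^ 2) * √(∫ x, ‖dot2 x (toR2 j) * f x‖ ^ 2) * ‖l‖) := by
  have hD : HasSum (fun m => (κ * |dot2 (h • (toR2 m - s)) v| * ‖latticeFT f s h m‖) ^ 2)
      ((κ / (2 * π)) ^ 2 * ∫ x, ‖fderiv ℝ f x v‖ ^ 2) := by
    refine ((hasSum_sq_dot2_mul_norm_latticeFT hf hh hs s v).mul_left _).congr_fun fun m => ?_
    field_simp
  obtain ⟨S, hSle, hS⟩ := exists_hasSum_sq_norm_latticeFT_sub_sub hf.continuous hh hs s j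
  have hsqrtD : √((κ / (2 * π)) ^ 2 * ∫ x, ‖fderiv ℝ f x v‖ ^ 2) =
      |κ| * (√(∫ x, ‖fderiv ℝ f x v‖ ^ 2) / (2 * π)) := by
    rw [Real.sqrt_mul (sq_nonneg _), Real.sqrt_sq_eq_abs, abs_div, abs_of_pos Real.two_pi_pos]
    ring
  have hsqrtS : √S ≤ 2 * π * h * √(∫ x, ‖dot2 x (toR2 j) * f x‖ ^ 2) := by
    refine (Real.sqrt_le_sqrt hSle).trans_eq ?_
    rw [Real.sqrt_mul (sq_nonneg _), Real.sqrt_sq (by positivity)]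
  refine (norm_tsum_conj_mul_mul_sub_le (hasSum_sq_norm_latticeFT hf.continuous hh hs s)
    (hasSum_sq_norm_latticeFT_sub hf.continuous hh hs s j) hD hS hb).trans ?_
  rw [hsqrtD, mul_assoc |κ|]
  refine add_le_add_right ((mul_le_mul_of_nonneg_right
    (mul_le_mul_of_nonneg_left hsqrtS (Real.sqrt_nonneg _)) (norm_nonneg l)).trans_eq ?_) _
  ring

theorem exists_hasSum_norm_latticeFT_mul_le (hf : Continuous f) (hh : 0 < h)
    (hs : Function.support f ⊆ Metric.closedBall 0 (2 * h)⁻¹) (s : ℝ × ℝ) (j : ℤ × ℤ)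
    {b : ℤ × ℤ → ℂ} {B : ℝ} (hb : ∀ m, ‖b m‖ ≤ B) :
    ∃ C ≤ (∫ x, ‖f x‖ ^ 2) * B, HasSum (fun m =>
      ‖(starRingEnd ℂ) (latticeFT f s h m) * latticeFT f s h (m - j) * b m‖) C := by
  obtain ⟨C, hC, hsum⟩ := exists_hasSum_mul_of_hasSum_sq (fun _ => norm_nonneg _)
    (fun _ => norm_nonneg _) (hasSum_sq_norm_latticeFT hf hh hs s)
    (hasSum_sq_norm_latticeFT_sub hf hh hs s j)
  rw [Real.mul_self_sqrt (by positivity)] at hC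
  have hle (m : ℤ × ℤ) : ‖(starRingEnd ℂ) (latticeFT f s h m) * latticeFT f s h (m - j) * b m‖ ≤
      ‖latticeFT f s h m‖ * ‖latticeFT f s h (m - j)‖ * B := by
    rw [norm_mul, norm_mul, RCLike.norm_conj]
    gcongr
    exact hb m
  have hsummable := Summable.of_nonneg_of_le (fun m => norm_nonneg _) hle
    (hsum.mul_right B).summable
  refine ⟨_, ?_, hsummable.hasSum⟩
  have hB : 0 ≤ B := (norm_nonneg _).trans (hb 0)
  exact (hasSum_le hle hsummable.hasSum (hsum.mul_right B)).trans
    (mul_le_mul_of_nonneg_right hC hB)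

end Plancherel

/-! ### Integration over the torus -/

/-- Invariance under translation by `ℤ²`, that is, being a function on the torus `𝕋²`. With values
in `ℝ → ℂ` it describes functions on `𝕋² × ℝ`. -/
def ZPeriodic {α : Type*} (f : ℝ × ℝ → α) : Prop :=
  ∀ (x : ℝ × ℝ) (j : ℤ × ℤ), f (x + toR2 j) = f x

theorem torusInt_eq_intervalIntegral {f : ℝ × ℝ → ℂ} (hf : Continuous f) :
    torusInt f = ∫ s in (0 : ℝ)..1, ∫ t in (0 : ℝ)..1, f (s, t) := by
  have hint : IntegrableOn f (Set.Icc 0 1 ×ˢ Set.Icc 0 1) :=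
    hf.continuousOn.integrableOn_compact (isCompact_Icc.prod isCompact_Icc)
  rw [torusInt, ← Set.Icc_prod_Icc, Measure.volume_eq_prod, setIntegral_prod _ hint]
  simp only [intervalIntegral.integral_of_le zero_le_one, integral_Icc_eq_integral_Ioc]

theorem integral_comp_add_of_periodic {g : ℝ → ℂ} (hg : Function.Periodic g 1) (α : ℝ) :
    ∫ t in (0 : ℝ)..1, g (t + α) = ∫ t in (0 : ℝ)..1, g t := by
  rw [intervalIntegral.integral_comp_add_right g, zero_add, add_comm,
    hg.intervalIntegral_add_eq α 0, zero_add]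

theorem integral_comp_int_mul_add {g : ℝ → ℂ} (hg : Function.Periodic g 1)
    (hgc : Continuous g) {n : ℤ} (hn : n ≠ 0) (α : ℝ) :
    ∫ t in (0 : ℝ)..1, g (n * t + α) = ∫ t in (0 : ℝ)..1, g t := by
  have hn' : (n : ℝ) ≠ 0 := Int.cast_ne_zero.2 hn
  have hperiods := hg.intervalIntegral_add_zsmul_eq n α fun _ _ => hgc.intervalIntegrable _ _
  rw [zsmul_one, hg.intervalIntegral_add_eq α 0, zero_add] at hperiods
  rw [intervalIntegral.integral_comp_mul_add _ hn', mul_zero, zero_add, mul_one, add_comm, hperiods,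
    ← Int.cast_smul_eq_zsmul ℝ, inv_smul_smul₀ hn']

theorem torusInt_comp_dot2 {g : ℝ → ℂ} (hg : Function.Periodic g 1) (hgc : Continuous g)
    {w : ℤ × ℤ} (hw : w ≠ 0) :
    torusInt (fun x => g (dot2 (toR2 w) x)) = ∫ t in (0 : ℝ)..1, g t := by
  rw [torusInt_eq_intervalIntegral (by fun_prop)]
  simp only [dot2, toR2]
  by_cases hw₂ : w.2 = 0
  · have hw₁ : w.1 ≠ 0 := fun hw₁ => hw (Prod.ext hw₁ hw₂)
    simpa [hw₂] using integral_comp_int_mul_add hg hgc hw₁ 0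
  · have hinner (s : ℝ) : ∫ t in (0 : ℝ)..1, g (w.1 * s + w.2 * t) = ∫ t in (0 : ℝ)..1, g t := by
      simpa only [add_comm] using integral_comp_int_mul_add hg hgc hw₂ (w.1 * s)
    simp [hinner]

theorem torusInt_intervalIntegral_swap {F : ℝ × ℝ → ℝ → ℂ} (hF : Continuous (Function.uncurry F))
    (b c : ℝ) :
    torusInt (fun x => ∫ t in b..c, F x t) = ∫ t in b..c, torusInt fun x => F x t := by
  refine (intervalIntegral_integral_swap (f := fun t x => F x t) ?_).symm
  rw [Measure.prod_restrict]
  exact ((hF.comp continuous_swap).continuousOn.integrableOn_compact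
    (isCompact_uIcc.prod isCompact_Icc)).mono_set (Set.prod_mono_left Set.uIoc_subset_uIcc)

namespace ZPeriodic

theorem torusInt_comp_add {f : ℝ × ℝ → ℂ} (hf : ZPeriodic f) (hfc : Continuous f) (y : ℝ × ℝ) :
    torusInt (fun x => f (x + y)) = torusInt f := by
  have hfst (t : ℝ) : Function.Periodic (fun s => f (s, t)) 1 := fun s => by
    simpa [toR2] using hf (s, t) (1, 0)
  have hsnd (s : ℝ) : Function.Periodic (fun t => f (s, t)) 1 := fun t => by
    simpa [toR2] using hf (s, t) (0, 1)
  have hinner : Function.Periodic (fun s => ∫ t in (0 : ℝ)..1, f (s, t)) 1 := fun s =>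
    intervalIntegral.integral_congr fun t _ => hfst t s
  rw [torusInt_eq_intervalIntegral hfc, torusInt_eq_intervalIntegral (by fun_prop),
    ← integral_comp_add_of_periodic hinner y.1]
  exact intervalIntegral.integral_congr fun s _ =>
    integral_comp_add_of_periodic (hsnd (s + y.1)) y.2

theorem torusInt_fderiv_apply {F : ℝ × ℝ → ℂ} (hFp : ZPeriodic F) (hF : ContDiff ℝ 1 F)
    (v : ℝ × ℝ) :
    torusInt (fun x => fderiv ℝ F x v) = 0 := by
  have hder (c : ℝ) (x : ℝ × ℝ) : HasFDerivAt (fun y => c • F y) (c • fderiv ℝ F x) x :=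
    (hF.differentiable one_ne_zero x).hasFDerivAt.const_smul c
  have hsplit (x : ℝ × ℝ) :
      fderiv ℝ F x v = (v.1 • fderiv ℝ F x) (1, 0) + (v.2 • fderiv ℝ F x) (0, 1) := by
    simp only [_root_.smul_apply, ← map_smul, ← map_add]
    simp
  have hcont : Continuous fun x => fderiv ℝ F x v :=
    (hF.continuous_fderiv one_ne_zero).clm_apply continuous_const
  have hx (t : ℝ) : F (1, t) = F (0, t) := by simpa [toR2] using hFp (0, t) (1, 0)
  have hy (s : ℝ) : F (s, 1) = F (s, 0) := by simpa [toR2] using hFp (s, 0) (0, 1)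
  have hdiv := integral_divergence_prod_Icc_of_hasFDerivAt_of_le (fun x => v.1 • F x)
    (fun x => v.2 • F x) _ _ 0 1 zero_le_one (hF.continuous.const_smul v.1).continuousOn
    (hF.continuous.const_smul v.2).continuousOn (fun x _ => hder v.1 x) (fun x _ => hder v.2 x)
    (by simpa only [← hsplit] using hcont.continuousOn.integrableOn_compact isCompact_Icc)
  simp only [← hsplit] at hdiv
  refine hdiv.trans ?_
  simp [hx, hy]

theorem mul_expI {f : ℝ × ℝ → ℂ} (hf : ZPeriodic f) (j : ℤ × ℤ) :
    ZPeriodic fun x => f x * expI (-(2 * π * dot2 (toR2 j) x)) := by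
  intro x k
  have hint : -(2 * π * dot2 (toR2 j) (toR2 k)) =
      2 * π * ((-(j.1 * k.1 + j.2 * k.2) : ℤ) : ℝ) := by
    simp only [dot2, toR2]
    push_cast
    ring
  simp only [hf x k, dot2_add, mul_add, neg_add, expI_add, hint, expI_two_pi_mul_intCast, mul_one]

theorem exists_norm_le {a : ℝ × ℝ → ℝ → ℂ} (ha : ZPeriodic a)
    (hac : Continuous fun p : (ℝ × ℝ) × ℝ => a p.1 p.2) {R : ℝ}
    (hR : ∀ x η, R ≤ |η| → a x η = 0) : ∃ M, ∀ x η, ‖a x η‖ ≤ M := by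
  obtain ⟨M, hM⟩ := ((isCompact_Icc (a := (0 : ℝ × ℝ)) (b := 1)).prod
    (isCompact_Icc (a := -R) (b := R))).exists_bound_of_continuousOn hac.continuousOn
  refine ⟨max M 0, fun x η => ?_⟩
  rcases le_or_gt R |η| with hη | hη
  · simp [hR x η hη]
  have hfract : (Int.fract x.1, Int.fract x.2) + toR2 (⌊x.1⌋, ⌊x.2⌋) = x := by
    simp [toR2, Int.fract_add_floor]
  rw [← hfract, ha]
  refine (hM ((Int.fract x.1, Int.fract x.2), η) ⟨⟨⟨?_, ?_⟩, ?_, ?_⟩, abs_le.1 hη.le⟩).trans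
    (le_max_left _ _)
  exacts [Int.fract_nonneg _, Int.fract_nonneg _, (Int.fract_lt_one _).le, (Int.fract_lt_one _).le]

end ZPeriodic

/-! ### Fourier coefficients of symbols -/

/-- The directional derivative `v · ∂ₓ a` of a symbol `a : 𝕋² × ℝ → ℂ` in its first variable. -/
def dirDeriv (v : ℝ × ℝ) (a : ℝ × ℝ → ℝ → ℂ) (x : ℝ × ℝ) (η : ℝ) : ℂ :=
  fderiv ℝ (fun y => a y η) x v

theorem contDiff_dirDeriv {n : WithTop ℕ∞} {a : ℝ × ℝ → ℝ → ℂ}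
    (ha : ContDiff ℝ (n + 1) fun p : (ℝ × ℝ) × ℝ => a p.1 p.2) (v : ℝ × ℝ) :
    ContDiff ℝ n fun p : (ℝ × ℝ) × ℝ => dirDeriv v a p.1 p.2 := by
  have hcomp : ContDiff ℝ (n + 1) fun q : ((ℝ × ℝ) × ℝ) × (ℝ × ℝ) => a q.2 q.1.2 :=
    ha.comp (contDiff_snd.prodMk (contDiff_snd.comp contDiff_fst))
  exact ContDiff.fderiv_apply hcomp contDiff_fst contDiff_const le_rfl

theorem ZPeriodic.dirDeriv {a : ℝ × ℝ → ℝ → ℂ} (ha : ZPeriodic a) (v : ℝ × ℝ) :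
    ZPeriodic (dirDeriv v a) := by
  intro x j
  funext η
  have hshift : (fun y => a (y + toR2 j) η) = fun y => a y η := funext fun y => by rw [ha]
  rw [_root_.dirDeriv, _root_.dirDeriv, ← fderiv_comp_add_right, hshift]

theorem dirDeriv_eq_zero {a : ℝ × ℝ → ℝ → ℂ} {η : ℝ} (ha : ∀ x, a x η = 0) (v x : ℝ × ℝ) :
    dirDeriv v a x η = 0 := by
  simp [dirDeriv, ha]

theorem norm_fcoef_le {a : ℝ × ℝ → ℝ → ℂ} {η M : ℝ} (hM : ∀ x, ‖a x η‖ ≤ M) (j : ℤ × ℤ) :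
    ‖fcoef a j η‖ ≤ M := by
  have hvol : volume.real (Set.Icc ((0, 0) : ℝ × ℝ) (1, 1)) = 1 := by
    rw [← Set.Icc_prod_Icc, Measure.real, Measure.volume_eq_prod, Measure.prod_prod]
    simp
  rw [← mul_one M, ← hvol]
  exact norm_setIntegral_le_of_norm_le_const isCompact_Icc.measure_lt_top
    fun x _ => by simpa using hM x

theorem integrableOn_mul_expI {f : ℝ × ℝ → ℂ} (hf : Continuous f) (ξ : ℝ × ℝ) :
    IntegrableOn (fun x => f x * expI (-(2 * π * dot2 ξ x))) (Set.Icc (0, 0) (1, 1)) :=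
  Continuous.integrableOn_Icc (by fun_prop)

theorem fcoef_dirDeriv {a : ℝ × ℝ → ℝ → ℂ} (ha : ZPeriodic a) {η : ℝ}
    (hac : ContDiff ℝ 1 fun x => a x η) (v : ℝ × ℝ) (j : ℤ × ℤ) :
    fcoef (dirDeriv v a) j η = 2 * π * dot2 (toR2 j) v * Complex.I * fcoef a j η := by
  have hper : ZPeriodic fun x => a x η := fun x k => congrFun (ha x k) η
  have hsmooth : ContDiff ℝ 1 fun x => a x η * expI (-(2 * π * dot2 (toR2 j) x)) :=
    hac.mul (contDiff_expI.comp (by unfold dot2; fun_prop))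
  have hcont : Continuous fun x => fderiv ℝ (fun y => a y η) x v :=
    (hac.continuous_fderiv one_ne_zero).clm_apply continuous_const
  have hzero := (hper.mul_expI j).torusInt_fderiv_apply hsmooth v
  simp only [fderiv_mul_expI (hac.differentiable one_ne_zero _), sub_mul,
    mul_assoc (2 * π * dot2 (toR2 j) v * Complex.I)] at hzero
  rw [torusInt, integral_sub (integrableOn_mul_expI hcont _)
    ((integrableOn_mul_expI hac.continuous _).const_mul _), integral_const_mul] at hzero
  exact sub_eq_zero.1 hzero

theorem dot2_toR2_zsmul (c : ℤ) (w : ℤ × ℤ) (x : ℝ × ℝ) :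
    dot2 (toR2 (c • w)) x = c * dot2 (toR2 w) x := by
  simp [dot2, toR2, mul_add, mul_assoc]

theorem dot2_toR2_self_pos {w : ℤ × ℤ} (hw : w ≠ 0) : 0 < dot2 (toR2 w) (toR2 w) := by
  refine lt_of_le_of_ne' (add_nonneg (mul_self_nonneg _) (mul_self_nonneg _)) fun h => hw ?_
  obtain ⟨h₁, h₂⟩ := mul_self_add_mul_self_eq_zero.1 h
  exact Prod.ext (Int.cast_eq_zero.1 h₁) (Int.cast_eq_zero.1 h₂)

theorem exists_summable_norm_fcoef_zsmul_le {a : ℝ × ℝ → ℝ → ℂ} (ha : ZPeriodic a)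
    (hac : ContDiff ℝ 2 fun p : (ℝ × ℝ) × ℝ => a p.1 p.2) {R : ℝ}
    (hR : ∀ x η, R ≤ |η| → a x η = 0) {w : ℤ × ℤ} (hw : w ≠ 0) :
    ∃ B : ℤ → ℝ, Summable B ∧ ∀ c η, ‖fcoef a (c • w) η‖ ≤ B c := by
  set v := toR2 w
  have hsec {n : WithTop ℕ∞} {b : ℝ × ℝ → ℝ → ℂ}
      (hb : ContDiff ℝ n fun p : (ℝ × ℝ) × ℝ => b p.1 p.2) (η : ℝ) :
      ContDiff ℝ n fun x => b x η := hb.comp (contDiff_id.prodMk contDiff_const)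
  have hd₁ : ContDiff ℝ 1 fun p : (ℝ × ℝ) × ℝ => dirDeriv v a p.1 p.2 :=
    contDiff_dirDeriv (by simpa [one_add_one_eq_two] using hac) v
  have hd₂ : Continuous fun p : (ℝ × ℝ) × ℝ => dirDeriv v (dirDeriv v a) p.1 p.2 :=
    (contDiff_dirDeriv (n := 0) (by simpa using hd₁) v).continuous
  obtain ⟨M₀, hM₀⟩ := ha.exists_norm_le hac.continuous hR
  obtain ⟨M₂, hM₂⟩ := ((ha.dirDeriv v).dirDeriv v).exists_norm_le hd₂
    fun x η hη => dirDeriv_eq_zero (fun y => dirDeriv_eq_zero (hR · η hη) v y) v x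
  set q := 2 * π * dot2 v v
  have hq : 0 < q := mul_pos two_pi_pos (dot2_toR2_self_pos hw)
  have hident (c : ℤ) (η : ℝ) :
      fcoef (dirDeriv v (dirDeriv v a)) (c • w) η = -((q * c) ^ 2 : ℝ) * fcoef a (c • w) η := by
    rw [fcoef_dirDeriv (ha.dirDeriv v) (hsec hd₁ η),
      fcoef_dirDeriv ha ((hsec hac η).of_le one_le_two), dot2_toR2_zsmul]
    push_cast [q]
    linear_combination (2 * π * (c * dot2 v v)) ^ 2 * fcoef a (c • w) η * Complex.I_sq
  have hsummable : Summable fun c : ℤ => M₂ / q ^ 2 * (1 / (c : ℝ) ^ 2) :=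
    (Real.summable_one_div_int_pow.2 one_lt_two).mul_left _
  refine ⟨_, hsummable.update 0 M₀, fun c η => ?_⟩
  rcases eq_or_ne c 0 with rfl | hc
  · simpa using norm_fcoef_le (hM₀ · η) 0
  rw [Function.update_of_ne hc, div_mul_div_comm, mul_one, ← mul_pow, le_div_iff₀' (by positivity)]
  have hbound := norm_fcoef_le (hM₂ · η) (c • w)
  rwa [hident, norm_mul, norm_neg, Complex.norm_real, norm_pow, norm_eq_abs, sq_abs] at hbound

theorem ZPeriodic.exists_norm_sub_zero_le {a : ℝ × ℝ → ℝ → ℂ} (ha : ZPeriodic a)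
    (hac : ContDiff ℝ 1 fun p : (ℝ × ℝ) × ℝ => a p.1 p.2) {R : ℝ}
    (hR : ∀ x η, R ≤ |η| → a x η = 0) : ∃ K, ∀ x η, ‖a x η - a x 0‖ ≤ K * |η| := by
  have hsec (x : ℝ × ℝ) : ContDiff ℝ 1 (a x) := hac.comp (contDiff_const.prodMk contDiff_id)
  have hcont : Continuous fun p : (ℝ × ℝ) × ℝ => deriv (a p.1) p.2 := by
    have hcomp : ContDiff ℝ (0 + 1) fun q : ((ℝ × ℝ) × ℝ) × ℝ => a q.1.1 q.2 := by
      rw [zero_add]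
      exact hac.comp ((contDiff_fst.comp contDiff_fst).prodMk contDiff_snd)
    exact (ContDiff.fderiv_apply hcomp contDiff_snd (contDiff_const (c := (1 : ℝ)))
      le_rfl).continuous
  have hvanish (x : ℝ × ℝ) (η : ℝ) (hη : R + 1 ≤ |η|) : deriv (a x) η = 0 := by
    have hlocal : a x =ᶠ[𝓝 η] 0 := by
      filter_upwards [(isOpen_lt continuous_const continuous_abs).mem_nhds
        (show R < |η| by linarith)] with t ht using hR x t ht.le
    simpa using hlocal.deriv_eq
  have hper : ZPeriodic fun x => deriv (a x) := fun x j => by simp only [ha x j]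
  obtain ⟨K, hK⟩ := hper.exists_norm_le hcont hvanish
  refine ⟨K, fun x η => ?_⟩
  simpa using convex_univ.norm_image_sub_le_of_norm_deriv_le
    (fun t _ => (hsec x).differentiable one_ne_zero t) (fun t _ => hK x t)
    (Set.mem_univ 0) (Set.mem_univ η)

theorem exists_norm_fcoef_sub_zero_le {a : ℝ × ℝ → ℝ → ℂ} (ha : ZPeriodic a)
    (hac : ContDiff ℝ 1 fun p : (ℝ × ℝ) × ℝ => a p.1 p.2) {R : ℝ}
    (hR : ∀ x η, R ≤ |η| → a x η = 0) :
    ∃ K, ∀ j η, ‖fcoef a j η - fcoef a j 0‖ ≤ K * |η| := by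
  obtain ⟨K, hK⟩ := ha.exists_norm_sub_zero_le hac hR
  have hsec (η : ℝ) : Continuous fun x => a x η := hac.continuous.comp (Continuous.prodMk_left η)
  refine ⟨K, fun j η => ?_⟩
  have hdiff : fcoef a j η - fcoef a j 0 = fcoef (fun x t => a x t - a x 0) j η := by
    simp only [fcoef, torusInt, sub_mul]
    exact (integral_sub (integrableOn_mul_expI (hsec η) _) (integrableOn_mul_expI (hsec 0) _)).symm
  rw [hdiff]
  exact norm_fcoef_le (hK · η) j

/-! ### Averaging along the orthogonal direction -/

theorem Primitive.ne_zero {w : ℤ × ℤ} (hw : Primitive w) : w ≠ 0 := by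
  rintro rfl
  simp [Primitive] at hw

theorem LL_pos {w : ℤ × ℤ} (hw : w ≠ 0) : 0 < LL w :=
  Real.sqrt_pos.2 (dot2_toR2_self_pos hw)

theorem Primitive.exists_dot2_eq_one {w : ℤ × ℤ} (hw : Primitive w) :
    ∃ u : ℤ × ℤ, dot2 (toR2 w) (toR2 u) = 1 := by
  have hbezout := Int.gcd_eq_gcd_ab w.1 w.2
  rw [hw] at hbezout
  refine ⟨(Int.gcdA w.1 w.2, Int.gcdB w.1 w.2), ?_⟩
  simp only [dot2, toR2]
  exact_mod_cast hbezout.symm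

theorem dot2_toR2_perpZ (w : ℤ × ℤ) : dot2 (toR2 w) (toR2 (perpZ w)) = 0 := by
  simp only [dot2, toR2, perpZ, Int.cast_neg]
  ring

theorem exists_eq_dot2_smul_add_smul_perpZ {w u : ℤ × ℤ} (hu : dot2 (toR2 w) (toR2 u) = 1)
    (x : ℝ × ℝ) : ∃ κ : ℝ, x = dot2 (toR2 w) x • toR2 u + κ • toR2 (perpZ w) := by
  refine ⟨u.1 * x.2 - u.2 * x.1, ?_⟩
  simp only [dot2, toR2, perpZ] at hu ⊢
  ext <;> simp only [Prod.fst_add, Prod.snd_add, Prod.smul_fst, Prod.smul_snd, smul_eq_mul,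
    Int.cast_neg]
  · linear_combination -x.1 * hu
  · linear_combination -x.2 * hu

theorem IΛ_eq_intervalIntegral {w : ℤ × ℤ} (hw : w ≠ 0) (a : ℝ × ℝ → ℝ → ℂ) (x : ℝ × ℝ) (η : ℝ) :
    IΛ w a x η = ∫ t in (0 : ℝ)..1, a (x + t • toR2 (perpZ w)) η := by
  have hL := (LL_pos hw).ne'
  rw [IΛ, intervalIntegral.integral_comp_div (fun t => a (x + t • toR2 (perpZ w)) η) hL, zero_div,
    div_self hL, Complex.real_smul, inv_mul_cancel_left₀ (Complex.ofReal_ne_zero.2 hL)]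

theorem continuous_IΛ {w : ℤ × ℤ} (hw : w ≠ 0) {a : ℝ × ℝ → ℝ → ℂ} {η : ℝ}
    (hac : Continuous fun x => a x η) : Continuous fun x => IΛ w a x η := by
  simp only [IΛ_eq_intervalIntegral hw]
  exact intervalIntegral.continuous_parametric_intervalIntegral_of_continuous'
    (f := fun x t => a (x + t • toR2 (perpZ w)) η) (hac.comp (by fun_prop)) 0 1

theorem ZPeriodic.IΛ {a : ℝ × ℝ → ℝ → ℂ} (ha : ZPeriodic a) (w : ℤ × ℤ) : ZPeriodic (IΛ w a) := by
  intro x j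
  funext η
  simp only [_root_.IΛ, add_right_comm x (toR2 j), ha _ j]

theorem IΛ_add_smul_perpZ {w : ℤ × ℤ} (hw : w ≠ 0) {a : ℝ × ℝ → ℝ → ℂ} (ha : ZPeriodic a)
    (x : ℝ × ℝ) (κ η : ℝ) : IΛ w a (x + κ • toR2 (perpZ w)) η = IΛ w a x η := by
  have hper : Function.Periodic (fun t : ℝ => a (x + t • toR2 (perpZ w)) η) 1 := fun t => by
    simp only [add_smul, one_smul, ← add_assoc, ha _ (perpZ w)]
  simp only [IΛ_eq_intervalIntegral hw, add_assoc, ← add_smul, add_comm κ]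
  exact integral_comp_add_of_periodic hper κ

theorem fcoef_IΛ {w : ℤ × ℤ} (hw : w ≠ 0) {a : ℝ × ℝ → ℝ → ℂ} (ha : ZPeriodic a) {η : ℝ}
    (hac : Continuous fun x => a x η) (c : ℤ) :
    fcoef (IΛ w a) (c • w) η = fcoef a (c • w) η := by
  set f : ℝ × ℝ → ℂ := fun x => a x η * expI (-(2 * π * dot2 (toR2 (c • w)) x))
  have hf : Continuous f := by fun_prop
  have hfp : ZPeriodic f :=
    ZPeriodic.mul_expI (f := fun x => a x η) (fun x j => congrFun (ha x j) η) _
  have hchar (x : ℝ × ℝ) (t : ℝ) :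
      dot2 (toR2 (c • w)) (x + t • toR2 (perpZ w)) = dot2 (toR2 (c • w)) x := by
    rw [dot2_add, dot2_smul, dot2_toR2_zsmul _ _ (toR2 (perpZ w)), dot2_toR2_perpZ, mul_zero,
      mul_zero, add_zero]
  have htranslate (x : ℝ × ℝ) : IΛ w a x η * expI (-(2 * π * dot2 (toR2 (c • w)) x)) =
      ∫ t in (0 : ℝ)..1, f (x + t • toR2 (perpZ w)) := by
    simp only [f, hchar, intervalIntegral.integral_mul_const, IΛ_eq_intervalIntegral hw]
  simp only [fcoef, htranslate]
  rw [torusInt_intervalIntegral_swap (F := fun x t => f (x + t • toR2 (perpZ w))) (by fun_prop)]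
  simp only [hfp.torusInt_comp_add hf, intervalIntegral.integral_const, sub_zero, one_smul, f]

theorem tsum_expI_mul_fcoef_zsmul {w : ℤ × ℤ} (hw : Primitive w) {a : ℝ × ℝ → ℝ → ℂ}
    (ha : ZPeriodic a) {η : ℝ} (hac : Continuous fun x => a x η)
    (hsum : Summable fun c : ℤ => fcoef a (c • w) η) (x : ℝ × ℝ) :
    ∑' c : ℤ, expI (2 * π * dot2 (toR2 (c • w)) x) * fcoef a (c • w) η = IΛ w a x η := by
  obtain ⟨u, hu⟩ := hw.exists_dot2_eq_one
  set G : ℝ → ℂ := fun τ => IΛ w a (τ • toR2 u) η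
  have hG (x : ℝ × ℝ) : IΛ w a x η = G (dot2 (toR2 w) x) := by
    obtain ⟨κ, hκ⟩ := exists_eq_dot2_smul_add_smul_perpZ hu x
    conv_lhs => rw [hκ]
    exact IΛ_add_smul_perpZ hw.ne_zero ha _ κ η
  have hGc : Continuous G := (continuous_IΛ hw.ne_zero hac).comp (by fun_prop)
  have hGp : Function.Periodic G 1 := fun τ => by
    simp only [G, add_smul, one_smul, ha.IΛ w _ u]
  let g : C(AddCircle (1 : ℝ), ℂ) := ⟨hGp.lift, continuous_coinduced_dom.2 hGc⟩
  have hcoeff (c : ℤ) : fourierCoeff g c = fcoef a (c • w) η := by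
    have hperiodic : Function.Periodic (fun τ : ℝ => G τ * expI (-(2 * π * (c * τ)))) 1 := by
      intro τ
      have hchar : -(2 * π * (c * (τ + 1))) = -(2 * π * (c * τ)) + 2 * π * ((-c : ℤ) : ℝ) := by
        push_cast
        ring
      simp only [hGp τ, hchar, expI_add, expI_two_pi_mul_intCast, mul_one]
    rw [← fcoef_IΛ hw.ne_zero ha hac, fcoef]
    simp only [hG, dot2_toR2_zsmul]
    rw [torusInt_comp_dot2 hperiodic (by fun_prop) hw.ne_zero,
      fourierCoeff_eq_intervalIntegral g c 0]
    simp only [fourier_coe_eq_expI, zero_add, div_one, one_smul, smul_eq_mul, Int.cast_neg, neg_mul,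
      mul_neg]
    exact intervalIntegral.integral_congr fun τ _ => mul_comm _ _
  have hpointwise := has_pointwise_sum_fourier_series_of_summable (f := g)
    (by simpa only [funext hcoeff] using hsum) (dot2 (toR2 w) x : AddCircle (1 : ℝ))
  simp only [hcoeff, fourier_coe_eq_expI, ← dot2_toR2_zsmul, smul_eq_mul,
    mul_comm (fcoef _ _ _)] at hpointwise
  exact hpointwise.tsum_eq.trans (hG x).symm

/-! ### The coherent-state asymptotics -/

theorem tendsto_sqrt_nhdsGT_zero : Tendsto (fun x : ℝ => √x) (𝓝[>] 0) (𝓝 0) := by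
  simpa using (continuous_sqrt.tendsto 0).mono_left nhdsWithin_le_nhds

theorem eventually_support_subset_closedBall {φ : ℝ × ℝ → ℂ} (hφ : HasCompactSupport φ) :
    ∀ᶠ hb : ℝ in 𝓝[>] 0, Function.support φ ⊆ Metric.closedBall 0 (2 * √hb)⁻¹ := by
  obtain ⟨r, hr⟩ := hφ.isBounded.subset_closedBall 0
  have hpos : ∀ᶠ hb : ℝ in 𝓝[>] 0, 2 * √hb ∈ Set.Ioi 0 := by
    filter_upwards [self_mem_nhdsWithin] with hb hb0 using mul_pos two_pos (sqrt_pos.2 hb0)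
  have hlim : Tendsto (fun hb : ℝ => (2 * √hb)⁻¹) (𝓝[>] 0) atTop :=
    (tendsto_nhdsWithin_iff.2
      ⟨by simpa using tendsto_sqrt_nhdsGT_zero.const_mul 2, hpos⟩).inv_tendsto_nhdsGT_zero
  filter_upwards [hlim.eventually_ge_atTop r] with hb hb_ge
  exact (subset_tsupport φ).trans (hr.trans (Metric.closedBall_subset_closedBall hb_ge))

theorem tendsto_tsum_latticeFT {φ : ℝ × ℝ → ℂ} (hφ : ContDiff ℝ 1 φ) (hφc : HasCompactSupport φ)
    (s : ℝ → ℝ × ℝ) (v : ℝ × ℝ) (j : ℤ × ℤ) {b : ℝ → ℤ × ℤ → ℂ} {l : ℂ} {κ : ℝ → ℝ}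
    (hκ : Tendsto κ (𝓝[>] 0) (𝓝 0))
    (hb : ∀ᶠ h in 𝓝[>] 0, ∀ m, ‖b h m - l‖ ≤ κ h * |dot2 (√h • (toR2 m - s h)) v|) :
    Tendsto (fun h => ∑' m, (starRingEnd ℂ) (latticeFT φ (s h) √h m) *
      latticeFT φ (s h) √h (m - j) * b h m) (𝓝[>] 0) (𝓝 (↑(∫ x, ‖φ x‖ ^ 2) * l)) := by
  rw [tendsto_iff_norm_sub_tendsto_zero]
  have hlim := (hκ.abs.mul_const (√(∫ x, ‖fderiv ℝ φ x v‖ ^ 2) / (2 * π) * √(∫ x, ‖φ x‖ ^ 2))).add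
    (tendsto_sqrt_nhdsGT_zero.mul_const
      (2 * π * √(∫ x, ‖φ x‖ ^ 2) * √(∫ x, ‖dot2 x (toR2 j) * φ x‖ ^ 2) * ‖l‖))
  simp only [abs_zero, zero_mul, add_zero] at hlim
  refine squeeze_zero' (.of_forall fun h => norm_nonneg _) ?_ hlim
  filter_upwards [self_mem_nhdsWithin, eventually_support_subset_closedBall hφc, hb]
    with h h0 hs hbh
  exact norm_tsum_latticeFT_sub_le hφ (sqrt_pos.2 h0) hs (s h) v j hbh

theorem Wcs_eq_tsum_tsum_latticeFT {φ : ℝ × ℝ → ℂ} (hφ : Continuous φ) {hb : ℝ} (hb0 : 0 < hb)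
    (hs : Function.support φ ⊆ Metric.closedBall 0 (2 * √hb)⁻¹) (x₀ ξ₀ : ℝ × ℝ) {w : ℤ × ℤ}
    {a : ℝ × ℝ → ℝ → ℂ} {B : ℤ → ℝ} (hB : Summable B) (ha : ∀ c η, ‖fcoef a (c • w) η‖ ≤ B c)
    (e : ℝ) :
    Wcs φ x₀ ξ₀ w a hb e = ∑' c : ℤ, expI (2 * π * dot2 (toR2 (c • w)) x₀) *
      ∑' m, (starRingEnd ℂ) (latticeFT φ (hb⁻¹ • ξ₀) √hb m) *
        latticeFT φ (hb⁻¹ • ξ₀) √hb (m - c • w) *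
          fcoef a (c • w) (2 * π * hb ^ 2 / e * HH w (toR2 m)) := by
  simp only [Wcs, conj_psiF_mul_psiF_sub, mul_assoc (expI _), ← tsum_mul_left]
  refine tsum_comm_of_norm_bounded (hB.mul_left (∫ x, ‖φ x‖ ^ 2)) fun c => ?_
  simpa only [norm_mul (expI _), norm_expI, one_mul] using
    exists_hasSum_norm_latticeFT_mul_le hφ (sqrt_pos.2 hb0) hs (hb⁻¹ • ξ₀) (c • w)
      (fun m => ha c (2 * π * hb ^ 2 / e * HH w (toR2 m)))

theorem tendsto_Wcs {φ : ℝ × ℝ → ℂ} (hφ : ContDiff ℝ 1 φ) (hφc : HasCompactSupport φ)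
    (x₀ ξ₀ v : ℝ × ℝ) {w : ℤ × ℤ} {a : ℝ × ℝ → ℝ → ℂ} {B : ℤ → ℝ} (hB : Summable B)
    (ha : ∀ c η, ‖fcoef a (c • w) η‖ ≤ B c) {ε : ℝ → ℝ} {l : ℤ → ℂ} {κ : ℤ → ℝ → ℝ}
    (hκ : ∀ c, Tendsto (κ c) (𝓝[>] 0) (𝓝 0))
    (hl : ∀ c, ∀ᶠ hb in 𝓝[>] 0, ∀ m,
      ‖fcoef a (c • w) (2 * π * hb ^ 2 / ε hb * HH w (toR2 m)) - l c‖ ≤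
        κ c hb * |dot2 (√hb • (toR2 m - hb⁻¹ • ξ₀)) v|) :
    Tendsto (fun hb => Wcs φ x₀ ξ₀ w a hb (ε hb)) (𝓝[>] 0)
      (𝓝 (↑(∫ x, ‖φ x‖ ^ 2) * ∑' c : ℤ, expI (2 * π * dot2 (toR2 (c • w)) x₀) * l c)) := by
  have hsupp := eventually_support_subset_closedBall hφc
  rw [← tsum_mul_left]
  refine (tendsto_tsum_of_dominated_convergence (hB.mul_left (∫ x, ‖φ x‖ ^ 2)) (fun c => ?_)
    ?_).congr' ?_ (f₁ := fun hb => ∑' c : ℤ, expI (2 * π * dot2 (toR2 (c • w)) x₀) *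
      ∑' m, (starRingEnd ℂ) (latticeFT φ (hb⁻¹ • ξ₀) √hb m) *
        latticeFT φ (hb⁻¹ • ξ₀) √hb (m - c • w) *
          fcoef a (c • w) (2 * π * hb ^ 2 / ε hb * HH w (toR2 m)))
  · rw [mul_left_comm]
    exact (tendsto_tsum_latticeFT hφ hφc _ v (c • w) (hκ c) (hl c)).const_mul _
  · filter_upwards [self_mem_nhdsWithin, hsupp] with hb hb0 hs c
    obtain ⟨C, hC, hsum⟩ := exists_hasSum_norm_latticeFT_mul_le hφ.continuous (sqrt_pos.2 hb0) hs
      (hb⁻¹ • ξ₀) (c • w) (fun m => ha c (2 * π * hb ^ 2 / ε hb * HH w (toR2 m)))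
    rw [norm_mul, norm_expI, one_mul]
    exact (tsum_of_norm_bounded hsum fun m => le_rfl).trans hC
  · filter_upwards [self_mem_nhdsWithin, hsupp] with hb hb0 hs
    exact (Wcs_eq_tsum_tsum_latticeFT hφ.continuous hb0 hs x₀ ξ₀ hB ha _).symm

theorem abs_mul_HH {w : ℤ × ℤ} (hw : w ≠ 0) {r : ℝ} (hr : 0 ≤ r) (ξ : ℝ × ℝ) :
    |r * HH w ξ| = r * |dot2 ξ (toR2 w)| / LL w := by
  rw [HH, abs_mul, abs_of_nonneg hr, abs_div, abs_of_pos (LL_pos hw), mul_div_assoc]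

theorem abs_dot2_sqrt_smul_sub {hb : ℝ} (hb0 : 0 < hb) (ξ ξ₀ v : ℝ × ℝ) :
    |dot2 (√hb • (ξ - hb⁻¹ • ξ₀)) v| = |hb * dot2 ξ v - dot2 ξ₀ v| / √hb := by
  rw [eq_div_iff (sqrt_ne_zero'.2 hb0), mul_comm, ← abs_of_nonneg (sqrt_nonneg hb), ← abs_mul,
    abs_of_nonneg (sqrt_nonneg hb)]
  congr 1
  rw [dot2_comm, dot2_smul, ← mul_assoc, mul_self_sqrt hb0.le, ← dot2_smul, smul_sub,
    smul_inv_smul₀ hb0.ne', sub_eq_add_neg, dot2_add, ← neg_one_smul ℝ ξ₀, dot2_smul, dot2_smul,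
    dot2_comm v, dot2_comm v]
  ring

theorem eventually_le_abs_sub_of_abs_lt {w : ℤ × ℤ} (hw : w ≠ 0) {ε : ℝ → ℝ}
    (hε : ∀ᶠ hb in 𝓝[>] 0, 0 < ε hb) (hε₁ : Tendsto (fun hb => ε hb / hb) (𝓝[>] 0) (𝓝 0))
    (R : ℝ) {ξ₀ : ℝ × ℝ} (hξ₀ : dot2 ξ₀ (toR2 w) ≠ 0) :
    ∀ᶠ hb in 𝓝[>] 0, ∀ ξ, |2 * π * hb ^ 2 / ε hb * HH w ξ| < R →
      |dot2 ξ₀ (toR2 w)| / 2 ≤ |hb * dot2 ξ (toR2 w) - dot2 ξ₀ (toR2 w)| := by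
  have hlim : Tendsto (fun hb => ε hb / hb * (R * LL w / (2 * π))) (𝓝[>] 0) (𝓝 0) := by
    simpa using hε₁.mul_const (R * LL w / (2 * π))
  filter_upwards [self_mem_nhdsWithin, hε, hlim.eventually_lt_const (half_pos (abs_pos.2 hξ₀))]
    with hb (hb0 : 0 < hb) hε0 hsmall ξ hη
  rw [abs_mul_HH hw (by positivity), div_lt_iff₀ (LL_pos hw)] at hη
  -- A bounded `η` forces `hb * ⟨ξ, w⟩ = O(ε / hb)`.
  have hξ : |hb * dot2 ξ (toR2 w)| ≤ |dot2 ξ₀ (toR2 w)| / 2 := calc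
    |hb * dot2 ξ (toR2 w)| =
        ε hb / hb * (2 * π * hb ^ 2 / ε hb * |dot2 ξ (toR2 w)| / (2 * π)) := by
      rw [abs_mul, abs_of_pos hb0]
      field_simp
    _ ≤ ε hb / hb * (R * LL w / (2 * π)) := by gcongr
    _ ≤ |dot2 ξ₀ (toR2 w)| / 2 := hsmall.le
  have htriangle := abs_sub_abs_le_abs_sub (dot2 ξ₀ (toR2 w)) (hb * dot2 ξ (toR2 w))
  rw [abs_sub_comm (dot2 ξ₀ _)] at htriangle
  linarith

theorem tendsto_Wcs_of_dot2_ne_zero {φ : ℝ × ℝ → ℂ} (hφ : ContDiff ℝ 1 φ)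
    (hφc : HasCompactSupport φ) (x₀ : ℝ × ℝ) {a : ℝ × ℝ → ℝ → ℂ} (ha : ZPeriodic a)
    (hac : ContDiff ℝ 2 fun p : (ℝ × ℝ) × ℝ => a p.1 p.2) {R : ℝ}
    (hR : ∀ x η, R ≤ |η| → a x η = 0) {w : ℤ × ℤ} (hw : w ≠ 0) {ε : ℝ → ℝ}
    (hε : ∀ᶠ hb in 𝓝[>] 0, 0 < ε hb) (hε₁ : Tendsto (fun hb => ε hb / hb) (𝓝[>] 0) (𝓝 0))
    {ξ₀ : ℝ × ℝ} (hξ₀ : dot2 ξ₀ (toR2 w) ≠ 0) :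
    Tendsto (fun hb => Wcs φ x₀ ξ₀ w a hb (ε hb)) (𝓝[>] 0) (𝓝 0) := by
  obtain ⟨B, hB, haB⟩ := exists_summable_norm_fcoef_zsmul_le ha hac hR hw
  have hB0 (c : ℤ) : 0 ≤ B c := (norm_nonneg _).trans (haB c 0)
  set κ₀ := |dot2 ξ₀ (toR2 w)| / 2
  have hκ₀ : 0 < κ₀ := half_pos (abs_pos.2 hξ₀)
  have hκ (c : ℤ) : Tendsto (fun hb => B c / κ₀ * √hb) (𝓝[>] 0) (𝓝 0) := by
    simpa using tendsto_sqrt_nhdsGT_zero.const_mul (B c / κ₀)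
  have hlim := tendsto_Wcs hφ hφc x₀ ξ₀ (toR2 w) hB haB (ε := ε) (l := 0) hκ fun c => ?_
  · simpa using hlim
  filter_upwards [self_mem_nhdsWithin, eventually_le_abs_sub_of_abs_lt hw hε hε₁ R hξ₀]
    with hb hb0 hfar m
  rw [Pi.zero_apply, sub_zero, abs_dot2_sqrt_smul_sub hb0, mul_assoc (B c / κ₀),
    mul_div_cancel₀ _ (sqrt_ne_zero'.2 hb0)]
  rcases le_or_gt R |2 * π * hb ^ 2 / ε hb * HH w (toR2 m)| with hη | hη
  · refine (norm_fcoef_le (fun x => (norm_eq_zero.2 (hR x _ hη)).le) _).trans ?_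
    have := hB0 c
    positivity
  · calc ‖fcoef a (c • w) (2 * π * hb ^ 2 / ε hb * HH w (toR2 m))‖ ≤ B c / κ₀ * κ₀ := by
          rw [div_mul_cancel₀ _ hκ₀.ne']
          exact haB c _
      _ ≤ _ := mul_le_mul_of_nonneg_left (hfar _ hη) (div_nonneg (hB0 c) hκ₀.le)

theorem rpow_three_halves_eq_mul_sqrt {x : ℝ} (hx : 0 < x) : x ^ (3 / 2 : ℝ) = x * √x := by
  rw [sqrt_eq_rpow, ← rpow_one_add' hx.le (by norm_num)]
  norm_num

theorem tendsto_Wcs_of_dot2_eq_zero {φ : ℝ × ℝ → ℂ} (hφ : ContDiff ℝ 1 φ)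
    (hφc : HasCompactSupport φ) (x₀ : ℝ × ℝ) {a : ℝ × ℝ → ℝ → ℂ} (ha : ZPeriodic a)
    (hac : ContDiff ℝ 2 fun p : (ℝ × ℝ) × ℝ => a p.1 p.2) {R : ℝ}
    (hR : ∀ x η, R ≤ |η| → a x η = 0) {w : ℤ × ℤ} (hw : Primitive w) {ε : ℝ → ℝ}
    (hε₃₂ : Tendsto (fun hb => ε hb / hb ^ (3 / 2 : ℝ)) (𝓝[>] 0) atTop)
    {ξ₀ : ℝ × ℝ} (hξ₀ : dot2 ξ₀ (toR2 w) = 0) :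
    Tendsto (fun hb => Wcs φ x₀ ξ₀ w a hb (ε hb)) (𝓝[>] 0)
      (𝓝 (↑(∫ x, ‖φ x‖ ^ 2) * IΛ w a x₀ 0)) := by
  obtain ⟨B, hB, haB⟩ := exists_summable_norm_fcoef_zsmul_le ha hac hR hw.ne_zero
  obtain ⟨K, hK⟩ := exists_norm_fcoef_sub_zero_le ha (hac.of_le one_le_two) hR
  have hL := LL_pos hw.ne_zero
  rw [← tsum_expI_mul_fcoef_zsmul hw ha (η := 0) (hac.continuous.comp (Continuous.prodMk_left 0))
    (.of_norm_bounded hB fun c => haB c 0) x₀]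
  have hκ : Tendsto (fun hb => K * (2 * π / LL w) * (ε hb / hb ^ (3 / 2 : ℝ))⁻¹) (𝓝[>] 0)
      (𝓝 0) := by
    simpa using hε₃₂.inv_tendsto_atTop.const_mul (K * (2 * π / LL w))
  refine tendsto_Wcs hφ hφc x₀ ξ₀ (toR2 w) hB haB (fun _ => hκ) fun c => ?_
  filter_upwards [self_mem_nhdsWithin, hε₃₂.eventually_gt_atTop 0] with hb (hb0 : 0 < hb) hpos m
  have hε : 0 < ε hb := (div_pos_iff_of_pos_right (rpow_pos_of_pos hb0 _)).1 hpos
  refine (hK _ _).trans_eq ?_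
  have := sqrt_pos.2 hb0
  rw [abs_mul_HH hw.ne_zero (by positivity), rpow_three_halves_eq_mul_sqrt hb0,
    abs_dot2_sqrt_smul_sub hb0, hξ₀, sub_zero, abs_mul, abs_of_pos hb0]
  field_simp

theorem hasCompactSupport_of_forall_abs_lt {φ : ℝ × ℝ → ℂ} {r : ℝ}
    (hφ : ∀ x, φ x ≠ 0 → |x.1| < r ∧ |x.2| < r) : HasCompactSupport φ := by
  refine HasCompactSupport.of_support_subset_isCompact
    ((isCompact_Icc (a := -r) (b := r)).prod (isCompact_Icc (a := -r) (b := r))) fun x hx => ?_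
  exact ⟨abs_le.1 (hφ x hx).1.le, abs_le.1 (hφ x hx).2.le⟩

theorem stmt6_general (ε : ℝ → ℝ) (hε : ∀ᶠ hb in 𝓝[>] 0, 0 < ε hb)
    (φ : ℝ × ℝ → ℂ) (hφ : ContDiff ℝ 1 φ) (hφc : HasCompactSupport φ) (x₀ ξ₀ : ℝ × ℝ)
    (a : ℝ × ℝ → ℝ → ℂ) (ha_smooth : ContDiff ℝ 2 fun p : (ℝ × ℝ) × ℝ => a p.1 p.2)
    (ha_per : ZPeriodic a) (ha_supp : ∃ R : ℝ, ∀ x η, R ≤ |η| → a x η = 0)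
    (w : ℤ × ℤ) (hw : Primitive w) :
    (Tendsto (fun hb => ε hb / hb) (𝓝[>] 0) (𝓝 0) → dot2 ξ₀ (toR2 w) ≠ 0 →
      Tendsto (fun hb => Wcs φ x₀ ξ₀ w a hb (ε hb)) (𝓝[>] 0) (𝓝 0)) ∧
    (Tendsto (fun hb => ε hb / hb ^ (3 / 2 : ℝ)) (𝓝[>] 0) atTop → dot2 ξ₀ (toR2 w) = 0 →
      Tendsto (fun hb => Wcs φ x₀ ξ₀ w a hb (ε hb)) (𝓝[>] 0)
        (𝓝 (↑(∫ x, ‖φ x‖ ^ 2) * IΛ w a x₀ 0))) := by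
  obtain ⟨R, hR⟩ := ha_supp
  exact ⟨fun hε₁ hξ₀ =>
      tendsto_Wcs_of_dot2_ne_zero hφ hφc x₀ ha_per ha_smooth hR hw.ne_zero hε hε₁ hξ₀,
    fun hε₃₂ hξ₀ => tendsto_Wcs_of_dot2_eq_zero hφ hφc x₀ ha_per ha_smooth hR hw hε₃₂ hξ₀⟩

/-- coherent states, large perturbations `hb^{3/2} ≪ ε_hb ≪ hb`. -/
theorem stmt6
    (ε : ℝ → ℝ) (hεpos : ∀ hb ∈ Set.Ioc (0:ℝ) 1, 0 < ε hb)
    (hε32 : Tendsto (fun hb => ε hb / hb ^ ((3:ℝ)/2)) (𝓝[>] (0:ℝ)) atTop)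
    (hε1 : Tendsto (fun hb => ε hb / hb) (𝓝[>] (0:ℝ)) (𝓝 0))
    (φ : ℝ × ℝ → ℂ) (hφ_smooth : ContDiff ℝ (⊤ : ℕ∞) φ)
    (hφ_supp : ∀ x : ℝ × ℝ, φ x ≠ 0 → |x.1| < 1/2 ∧ |x.2| < 1/2)
    (hφ_norm : ∫ x : ℝ × ℝ, ‖φ x‖ ^ 2 = 1)
    (x₀ ξ₀ : ℝ × ℝ) (hξ₀ : ξ₀ ≠ 0)
    (a : ℝ × ℝ → ℝ → ℂ)
    (ha_smooth : ContDiff ℝ (⊤ : ℕ∞) fun p : (ℝ × ℝ) × ℝ => a p.1 p.2)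
    (ha_per : ∀ (x : ℝ × ℝ) (η : ℝ) (j : ℤ × ℤ), a (x + toR2 j) η = a x η)
    (ha_supp : ∃ R : ℝ, ∀ (x : ℝ × ℝ) (η : ℝ), R ≤ |η| → a x η = 0) :
    ∀ w : ℤ × ℤ, Primitive w →
      (dot2 ξ₀ (toR2 w) ≠ 0 →
        Tendsto (fun hb => Wcs φ x₀ ξ₀ w a hb (ε hb)) (𝓝[>] (0:ℝ)) (𝓝 0))
      ∧
      (dot2 ξ₀ (toR2 w) = 0 →
        Tendsto (fun hb => Wcs φ x₀ ξ₀ w a hb (ε hb)) (𝓝[>] (0:ℝ)) (𝓝 (IΛ w a x₀ 0))) := by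
  intro w hw
  obtain ⟨hnonresonant, hresonant⟩ := stmt6_general ε
    (by filter_upwards [Ioc_mem_nhdsGT one_pos] using hεpos) φ (hφ_smooth.of_le (mod_cast le_top))
    (hasCompactSupport_of_forall_abs_lt hφ_supp) x₀ ξ₀ a (contDiff_infty.1 ha_smooth 2)
    (fun x j => funext fun η => ha_per x η j) ha_supp w hw
  exact ⟨hnonresonant hε1, by simpa [hφ_norm] using hresonant hε32⟩
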